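/- Let I be a monomial ideal of S = K[x_1,...,x_n] generated in a single degree, and write v(I^k) = α(I)·k + b and v_p(I^k) = α(I)·k + b_p for all k ≫ 0 and stable primes p of I (such integers b and b_p exist). Then b ≥ −1 and b_p ≥ −1 for every stable prime p of I. -/

import Mathlib

/-!
If `(I ^ k : f) = p` is prime, then `f ≠ 0`, and `p` contains `I`, hence, when `I ≠ 0`, a monomial
and a variable `X i`. So `X i * f` is a nonzero form of degree `deg f + 1` in `I ^ k`. The ideal
`I ^ k` lies in the power `α(I) * k` of the ideal of variables, hence `α(I) * k ≤ deg f + 1`.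
-/

open MvPolynomial

noncomputable section

variable (K : Type*) [Field K]

/-- The set of associated primes of `S/I`. -/
def assPrimes {σ : Type*} (I : Ideal (MvPolynomial σ K)) : Set (Ideal (MvPolynomial σ K)) :=
  associatedPrimes (MvPolynomial σ K) (MvPolynomial σ K ⧸ I)

/-- The v-number of `I` at a prime `p`:
`min {d : ∃ homogeneous f of degree d with (I : f) = p}`. -/
def vNumberAt {σ : Type*} (I p : Ideal (MvPolynomial σ K)) : ℕ :=
  sInf {d | ∃ f : MvPolynomial σ K, f.IsHomogeneous d ∧ I.colon (Ideal.span {f}) = p}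

/-- The v-number of `I`:
`min {d : ∃ homogeneous f of degree d with (I : f) ∈ Ass(I)}`. -/
def vNumber {σ : Type*} (I : Ideal (MvPolynomial σ K)) : ℕ :=
  sInf {d | ∃ f : MvPolynomial σ K, f.IsHomogeneous d ∧
    I.colon (Ideal.span {f}) ∈ assPrimes K I}

/-- The initial degree `α(I) = min {d : I_d ≠ 0}`. -/
def initialDegree {σ : Type*} (I : Ideal (MvPolynomial σ K)) : ℕ :=
  sInf {d | ∃ f ∈ I, f ≠ 0 ∧ f.IsHomogeneous d}

/-- A monomial ideal: an ideal generated by monomials. -/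
def IsMonomialIdeal {σ : Type*} (I : Ideal (MvPolynomial σ K)) : Prop :=
  ∃ A : Set (σ →₀ ℕ), I = Ideal.span ((fun m => (monomial m (1 : K) : MvPolynomial σ K)) '' A)

/-- The stable primes of `I`: primes belonging to `Ass(I^k)` for all `k ≫ 0`. -/
def stablePrimes {σ : Type*} (I : Ideal (MvPolynomial σ K)) : Set (Ideal (MvPolynomial σ K)) :=
  {p | ∃ N : ℕ, ∀ k : ℕ, N ≤ k → p ∈ assPrimes K (I ^ k)}

/-- `I` is generated in a single degree. -/
def Equigenerated {σ : Type*} (I : Ideal (MvPolynomial σ K)) : Prop :=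
  ∃ (d : ℕ) (A : Set (MvPolynomial σ K)), (∀ f ∈ A, f.IsHomogeneous d) ∧ I = Ideal.span A

section Ideals

variable {σ R : Type*} [CommSemiring R]

theorem le_of_isHomogeneous_of_mem_pow_idealOfVars {f : MvPolynomial σ R} {d n : ℕ}
    (hf : f.IsHomogeneous d) (hf0 : f ≠ 0) (hmem : f ∈ idealOfVars σ R ^ n) : n ≤ d := by
  obtain ⟨m, hm⟩ := support_nonempty.2 hf0
  rw [hf.degree_eq_sum_deg_support hm, ← Finsupp.degree_apply]
  exact (mem_pow_idealOfVars_iff n f).1 hmem m hm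

theorem exists_X_mem_of_monomial_mem {p : Ideal (MvPolynomial σ R)} (hp : p.IsPrime)
    {m : σ →₀ ℕ} (hm : monomial m (1 : R) ∈ p) : ∃ i ∈ m.support, X i ∈ p := by
  rw [monomial_eq, C_1, one_mul, Finsupp.prod, hp.prod_mem_iff] at hm
  obtain ⟨i, hi, hXi⟩ := hm
  exact ⟨i, hi, hp.mem_of_pow_mem _ hXi⟩

end Ideals

section InitialDegree

variable {K} {σ : Type*} {I : Ideal (MvPolynomial σ K)}

attribute [local instance] MvPolynomial.gradedAlgebra

theorem initialDegree_bot : initialDegree K (⊥ : Ideal (MvPolynomial σ K)) = 0 := by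
  simp [initialDegree]

theorem initialDegree_le {f : MvPolynomial σ K} {d : ℕ} (hmem : f ∈ I) (hf0 : f ≠ 0)
    (hf : f.IsHomogeneous d) : initialDegree K I ≤ d :=
  Nat.sInf_le ⟨f, hmem, hf0, hf⟩

theorem le_pow_idealOfVars_initialDegree (hI : I.IsHomogeneous (homogeneousSubmodule σ K)) :
    I ≤ idealOfVars σ K ^ initialDegree K I := by
  intro f hf
  rw [mem_pow_idealOfVars_iff]
  intro m hm
  have hcomp : homogeneousComponent m.degree f ≠ 0 := by
    refine ne_zero_iff.2 ⟨m, ?_⟩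
    rw [coeff_homogeneousComponent, if_pos rfl]
    exact mem_support_iff.1 hm
  exact initialDegree_le (homogeneousComponent_mem_of_mem hI hf _) hcomp
    (homogeneousComponent_isHomogeneous _ f)

theorem initialDegree_mul_le_of_mem_pow (hI : I.IsHomogeneous (homogeneousSubmodule σ K))
    {k d : ℕ} {f : MvPolynomial σ K} (hmem : f ∈ I ^ k) (hf0 : f ≠ 0) (hf : f.IsHomogeneous d) :
    initialDegree K I * k ≤ d := by
  have hpow : I ^ k ≤ idealOfVars σ K ^ (initialDegree K I * k) := by
    rw [pow_mul]
    exact Ideal.pow_right_mono (le_pow_idealOfVars_initialDegree hI) k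
  exact le_of_isHomogeneous_of_mem_pow_idealOfVars hf hf0 (hpow hmem)

theorem IsMonomialIdeal.isHomogeneous (hI : IsMonomialIdeal K I) :
    I.IsHomogeneous (homogeneousSubmodule σ K) := by
  obtain ⟨A, rfl⟩ := hI
  refine Ideal.homogeneous_span _ _ ?_
  rintro _ ⟨m, -, rfl⟩
  exact ⟨m.degree, isHomogeneous_monomial 1 rfl⟩

theorem IsMonomialIdeal.exists_X_mem (hI : IsMonomialIdeal K I) (hI0 : I ≠ ⊥)
    {p : Ideal (MvPolynomial σ K)} (hp : p.IsPrime) (hIp : I ≤ p) : ∃ i, X i ∈ p := by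
  obtain ⟨A, rfl⟩ := hI
  obtain rfl | ⟨m, hm⟩ := A.eq_empty_or_nonempty
  · simp at hI0
  · have hmp : monomial m (1 : K) ∈ p := hIp (Ideal.subset_span ⟨m, hm, rfl⟩)
    obtain ⟨i, -, hi⟩ := exists_X_mem_of_monomial_mem hp hmp
    exact ⟨i, hi⟩

end InitialDegree

section VNumber

variable {K} {σ : Type*} {I : Ideal (MvPolynomial σ K)}

theorem IsMonomialIdeal.initialDegree_mul_le_of_isPrime_colon (hI : IsMonomialIdeal K I)
    {k d : ℕ} {f : MvPolynomial σ K} (hf : f.IsHomogeneous d)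
    (hp : ((I ^ k).colon (Ideal.span {f})).IsPrime) : initialDegree K I * k ≤ d + 1 := by
  obtain rfl | hI0 := eq_or_ne I ⊥
  · simp [initialDegree_bot]
  have hf0 : f ≠ 0 := by
    rintro rfl
    exact hp.ne_top (by simp)
  have hIp : I ≤ (I ^ k).colon (Ideal.span {f}) := fun g hg ↦
    hp.mem_of_pow_mem k (Ideal.le_colon (Ideal.pow_mem_pow hg k))
  obtain ⟨i, hi⟩ := hI.exists_X_mem hI0 hp hIp
  have hXf : X i * f ∈ I ^ k := Ideal.mem_colon_span_singleton.1 hi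
  have hdeg : (X i * f).IsHomogeneous (d + 1) := add_comm 1 d ▸ (isHomogeneous_X K i).mul hf
  exact initialDegree_mul_le_of_mem_pow hI.isHomogeneous hXf (mul_ne_zero (X_ne_zero i) hf0) hdeg

-- A nonzero `sInf` in `ℕ` is attained; the value `0` may be the junk value of `sInf ∅`.
theorem IsMonomialIdeal.initialDegree_mul_le_vNumberAt_add_one (hI : IsMonomialIdeal K I)
    {p : Ideal (MvPolynomial σ K)} (hp : p.IsPrime) {k : ℕ} (hv : vNumberAt K (I ^ k) p ≠ 0) :
    initialDegree K I * k ≤ vNumberAt K (I ^ k) p + 1 := by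
  obtain ⟨f, hf, hcolon⟩ := Nat.sInf_mem (Nat.nonempty_of_pos_sInf (Nat.pos_of_ne_zero hv))
  exact hI.initialDegree_mul_le_of_isPrime_colon hf (hcolon ▸ hp)

theorem IsMonomialIdeal.initialDegree_mul_le_vNumber_add_one (hI : IsMonomialIdeal K I)
    {k : ℕ} (hv : vNumber K (I ^ k) ≠ 0) :
    initialDegree K I * k ≤ vNumber K (I ^ k) + 1 := by
  obtain ⟨f, hf, hass⟩ := Nat.sInf_mem (Nat.nonempty_of_pos_sInf (Nat.pos_of_ne_zero hv))
  exact hI.initialDegree_mul_le_of_isPrime_colon hf hass.isPrime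

end VNumber

theorem neg_le_of_eventually_eq_mul_add {v : ℕ → ℕ} {a c N : ℕ} {b : ℤ}
    (hle : ∀ k, v k ≠ 0 → a * k ≤ v k + c) (hv : ∀ k, N ≤ k → (v k : ℤ) = a * k + b) :
    -(c : ℤ) ≤ b := by
  by_contra! hb
  have hzero : ∀ k, N ≤ k → v k = 0 := by
    intro k hk
    by_contra hne
    have hlower : (a * k : ℤ) ≤ v k + c := by exact_mod_cast hle k hne
    linarith [hv k hk]
  have hN := hv N le_rfl
  have hN1 := hv (N + 1) N.le_succ
  rw [hzero N le_rfl] at hN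
  rw [hzero (N + 1) N.le_succ] at hN1
  push_cast at hN hN1
  have ha : (a : ℤ) = 0 := by linarith
  rw [ha] at hN
  linarith

theorem stmt3_general {σ : Type*} (I : Ideal (MvPolynomial σ K)) (hmon : IsMonomialIdeal K I)
    (b : ℤ) (N : ℕ)
    (hb : ∀ k : ℕ, N ≤ k → (vNumber K (I ^ k) : ℤ) = (initialDegree K I : ℤ) * k + b)
    (p : Ideal (MvPolynomial σ K)) (hp : p ∈ stablePrimes K I)
    (bp : ℤ) (Np : ℕ)
    (hbp : ∀ k : ℕ, Np ≤ k →
      (vNumberAt K (I ^ k) p : ℤ) = (initialDegree K I : ℤ) * k + bp) :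
    -1 ≤ b ∧ -1 ≤ bp := by
  obtain ⟨M, hM⟩ := hp
  have hprime : p.IsPrime := (hM M le_rfl).isPrime
  exact ⟨neg_le_of_eventually_eq_mul_add (c := 1)
      (fun _ ↦ hmon.initialDegree_mul_le_vNumber_add_one) hb,
    neg_le_of_eventually_eq_mul_add (c := 1)
      (fun _ ↦ hmon.initialDegree_mul_le_vNumberAt_add_one hprime) hbp⟩

/-- For an equigenerated monomial ideal `I`, the constants `b` and `b_p` in the eventually
linear functions `v(I^k) = α(I)·k + b` and `v_p(I^k) = α(I)·k + b_p` satisfy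
`b ≥ -1` and `b_p ≥ -1`. -/
theorem stmt3 {n : ℕ} (I : Ideal (MvPolynomial (Fin n) K))
    (hmon : IsMonomialIdeal K I) (heq : Equigenerated K I)
    (b : ℤ) (N : ℕ)
    (hb : ∀ k : ℕ, N ≤ k → (vNumber K (I ^ k) : ℤ) = (initialDegree K I : ℤ) * k + b)
    (p : Ideal (MvPolynomial (Fin n) K)) (hp : p ∈ stablePrimes K I)
    (bp : ℤ) (Np : ℕ)
    (hbp : ∀ k : ℕ, Np ≤ k →
      (vNumberAt K (I ^ k) p : ℤ) = (initialDegree K I : ℤ) * k + bp) :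
    -1 ≤ b ∧ -1 ≤ bp := by
  exact stmt3_general K I hmon b N hb p hp bp Np hbp

end
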